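/- Let F be an algebraically closed field with characteristic ≠ 2. Then the automorphism group of the algebra E2(0) with MSC [[1,0,0,0],[1,0,0,0]] is Aut(E2(0)) = { [[1,0],[t,1-t]] : t ∈ F, t ≠ 1 }. -/

import Mathlib

open Matrix Kronecker

variable {F : Type*}

/-- The Kronecker (tensor) product of two `2 × 2` matrices, realized as a `4 × 4` matrix;
rows/columns are indexed in row-major order by the pairs `(1,1), (1,2), (2,1), (2,2)`. -/
def kron [CommRing F] (g h : Matrix (Fin 2) (Fin 2) F) : Matrix (Fin 4) (Fin 4) F :=
  Matrix.reindex finProdFinEquiv finProdFinEquiv (g ⊗ₖ h)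

/-- Two `2`-dimensional algebras given by matrices of structure constants `A, B`
are isomorphic iff `B = g · A · (g⁻¹ ⊗ g⁻¹)` for some `g ∈ GL(2, F)`. -/
def Isomorphic [Field F] (A B : Matrix (Fin 2) (Fin 4) F) : Prop :=
  ∃ g : GL (Fin 2) F,
    B = (g : Matrix (Fin 2) (Fin 2) F) * A *
        kron ((↑(g⁻¹) : Matrix (Fin 2) (Fin 2) F)) ((↑(g⁻¹) : Matrix (Fin 2) (Fin 2) F))

/-- The automorphism group of the algebra with MSC `E`, as a set of (invertible) `2 × 2`
matrices: `Aut(E) = {g ∈ GL(2,F) : g·E = E·(g ⊗ g)}`. -/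
def Aut [Field F] (E : Matrix (Fin 2) (Fin 4) F) : Set (Matrix (Fin 2) (Fin 2) F) :=
  {g | IsUnit g ∧ g * E = E * kron g g}

/-- The derivation algebra of the algebra with MSC `E`:
`Der(E) = { D : E·(D ⊗ I + I ⊗ D) = D·E }`. -/
def Der [Field F] (E : Matrix (Fin 2) (Fin 4) F) : Set (Matrix (Fin 2) (Fin 2) F) :=
  {D | E * (kron D 1 + kron 1 D) = D * E}

/-!
The algebra `E₂(0)` has the product `u · v = ℓ(u) ℓ(v) w` with `ℓ = (1, 0)`, `w = (1, 1)`. Whenever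
`ℓ(w) ≠ 0`, the functional `ℓ` and the vector `w` can be recovered from such a product: comparing
`g(w · w)` with `g(w) · g(w)` gives `ℓ(w)² g(w) = ℓ(g w)² w`, and applying `ℓ` forces
`ℓ(g w) = ℓ(w)`, hence `g w = w`; then `g(u · w) = g(u) · w` gives `ℓ ∘ g = ℓ`. So the automorphisms
are the invertible matrices fixing both `w` and `ℓ`.
-/

section RankOneProduct

variable {R M : Type*} [CommRing R] [IsDomain R] [AddCommGroup M] [Module R M]
  [Module.IsTorsionFree R M]

theorem eq_of_sq_dual_smul_eq {ℓ : Module.Dual R M} {w x : M} (hw : ℓ w ≠ 0) (hx : x ≠ 0)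
    (h : ℓ w ^ 2 • x = ℓ x ^ 2 • w) : x = w := by
  have hw2 : ℓ w ^ 2 ≠ 0 := pow_ne_zero 2 hw
  have hℓx : ℓ x ≠ 0 := by
    intro h0
    have hzero : ℓ w ^ 2 • x = 0 := by rw [h, h0, zero_pow two_ne_zero, zero_smul]
    exact smul_ne_zero hw2 hx hzero
  have happly : ℓ w ^ 2 * ℓ x = ℓ x ^ 2 * ℓ w := by
    simpa only [map_smul, smul_eq_mul] using congrArg ℓ h
  have hℓ : ℓ x = ℓ w := by
    apply mul_left_cancel₀ (mul_ne_zero hw hℓx)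
    linear_combination -happly
  rw [hℓ] at h
  exact smul_right_injective M hw2 h

theorem map_dual_mul_dual_smul_iff {ℓ : Module.Dual R M} {g : M →ₗ[R] M} {w : M}
    (hw : ℓ w ≠ 0) (hgw : g w ≠ 0) :
    (∀ u v, g ((ℓ u * ℓ v) • w) = (ℓ (g u) * ℓ (g v)) • w) ↔ g w = w ∧ ℓ ∘ₗ g = ℓ := by
  constructor
  · intro hmul
    have hsq : ℓ w ^ 2 • g w = ℓ (g w) ^ 2 • w := by
      simpa only [map_smul, ← sq] using hmul w w
    have hfix : g w = w := eq_of_sq_dual_smul_eq hw hgw hsq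
    refine ⟨hfix, LinearMap.ext fun u => ?_⟩
    have hw0 : w ≠ 0 := fun h0 => hw (by rw [h0, map_zero])
    have hu : (ℓ u * ℓ w) • w = (ℓ (g u) * ℓ w) • w := by
      simpa only [map_smul, hfix] using hmul u w
    exact (mul_right_cancel₀ hw (smul_left_injective R hw0 hu)).symm
  · rintro ⟨hfix, hℓ⟩ u v
    have hℓg (x : M) : ℓ (g x) = ℓ x := LinearMap.congr_fun hℓ x
    rw [map_smul, hfix, hℓg, hℓg]

end RankOneProduct

section TensorVec

variable {R : Type*} [CommRing R]

/-- The tensor product `u ⊗ v` of two vectors of `R²`, as a vector of `R⁴`, with the same row-major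
indexing as `kron`. The algebra with matrix of structure constants `E` has the product
`u · v = E *ᵥ tensorVec u v`. -/
def tensorVec (u v : Fin 2 → R) : Fin 4 → R :=
  (fun p : Fin 2 × Fin 2 => u p.1 * v p.2) ∘ (finProdFinEquiv (m := 2) (n := 2)).symm

theorem tensorVec_eq_vecCons (u v : Fin 2 → R) :
    tensorVec u v = ![u 0 * v 0, u 0 * v 1, u 1 * v 0, u 1 * v 1] := by
  funext k
  fin_cases k <;> rfl

theorem tensorVec_single_single (p : Fin 2 × Fin 2) :
    tensorVec (Pi.single p.1 (1 : R)) (Pi.single p.2 1) = Pi.single (finProdFinEquiv p) 1 := by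
  funext k
  obtain ⟨q, rfl⟩ := (finProdFinEquiv (m := 2) (n := 2)).surjective k
  simp only [tensorVec, Function.comp_apply, Equiv.symm_apply_apply, Pi.single_apply,
    EmbeddingLike.apply_eq_iff_eq, Prod.ext_iff, ite_and, ite_mul, one_mul, zero_mul]

theorem tensorVec_dotProduct_tensorVec (a b u v : Fin 2 → R) :
    tensorVec a b ⬝ᵥ tensorVec u v = (a ⬝ᵥ u) * (b ⬝ᵥ v) := by
  rw [tensorVec, tensorVec, comp_equiv_dotProduct_comp_equiv]
  simp only [dotProduct, Fintype.sum_mul_sum, Fintype.sum_prod_type, mul_mul_mul_comm]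

theorem vecMulVec_tensorVec_mulVec_tensorVec {m : Type*} (w : m → R) (a b u v : Fin 2 → R) :
    vecMulVec w (tensorVec a b) *ᵥ tensorVec u v = ((a ⬝ᵥ u) * (b ⬝ᵥ v)) • w := by
  rw [vecMulVec_mulVec, tensorVec_dotProduct_tensorVec, op_smul_eq_smul]

theorem kron_mulVec_tensorVec (g h : Matrix (Fin 2) (Fin 2) R) (u v : Fin 2 → R) :
    kron g h *ᵥ tensorVec u v = tensorVec (g *ᵥ u) (h *ᵥ v) :=
  funext fun _ => tensorVec_dotProduct_tensorVec (g _) (h _) u v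

theorem eq_iff_forall_mulVec_tensorVec {m : Type*} {A B : Matrix m (Fin 4) R} :
    A = B ↔ ∀ u v, A *ᵥ tensorVec u v = B *ᵥ tensorVec u v := by
  refine ⟨fun h _ _ => h ▸ rfl, fun h => ext_of_mulVec_single fun k => ?_⟩
  obtain ⟨p, rfl⟩ := (finProdFinEquiv (m := 2) (n := 2)).surjective k
  rw [← tensorVec_single_single, h]

theorem E2_zero_eq_vecMulVec_tensorVec :
    (!![1, 0, 0, 0; 1, 0, 0, 0] : Matrix (Fin 2) (Fin 4) R) =
      vecMulVec ![1, 1] (tensorVec ![1, 0] ![1, 0]) := by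
  ext i j
  fin_cases i <;> fin_cases j <;> simp [vecMulVec_apply, tensorVec_eq_vecCons]

theorem mulVec_one_one_and_vecMul_one_zero_iff {g : Matrix (Fin 2) (Fin 2) R} :
    g *ᵥ ![1, 1] = ![1, 1] ∧ ![1, 0] ᵥ* g = ![1, 0] ↔ ∃ t, g = !![1, 0; t, 1 - t] := by
  constructor
  · rintro ⟨hw, hℓ⟩
    have h00 : g 0 0 = 1 := by simpa [vecMul, dotProduct] using congrFun hℓ 0
    have h01 : g 0 1 = 0 := by simpa [vecMul, dotProduct] using congrFun hℓ 1
    have h1 : g 1 0 + g 1 1 = 1 := by simpa [mulVec, dotProduct] using congrFun hw 1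
    refine ⟨g 1 0, (eta_fin_two g).trans ?_⟩
    rw [h00, h01, eq_sub_of_add_eq' h1]
  · rintro ⟨t, rfl⟩
    simp [funext_iff, Fin.forall_fin_two]

end TensorVec

section Aut

variable [Field F]

theorem mem_Aut_iff_mulVec_tensorVec {E : Matrix (Fin 2) (Fin 4) F}
    {g : Matrix (Fin 2) (Fin 2) F} :
    g ∈ Aut E ↔
      IsUnit g ∧ ∀ u v, g *ᵥ (E *ᵥ tensorVec u v) = E *ᵥ tensorVec (g *ᵥ u) (g *ᵥ v) := by
  simp only [Aut, Set.mem_ofPred_eq, eq_iff_forall_mulVec_tensorVec, ← mulVec_mulVec,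
    kron_mulVec_tensorVec]

theorem mem_Aut_vecMulVec_tensorVec_iff {w ℓ : Fin 2 → F} (hw : ℓ ⬝ᵥ w ≠ 0)
    {g : Matrix (Fin 2) (Fin 2) F} :
    g ∈ Aut (vecMulVec w (tensorVec ℓ ℓ)) ↔ IsUnit g ∧ g *ᵥ w = w ∧ ℓ ᵥ* g = ℓ := by
  simp only [mem_Aut_iff_mulVec_tensorVec, vecMulVec_tensorVec_mulVec_tensorVec]
  refine and_congr_right fun hg => ?_
  have hgw : g *ᵥ w ≠ 0 := by
    intro h0
    have hw0 : w = 0 := mulVec_injective_of_isUnit hg (h0.trans (mulVec_zero g).symm)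
    exact hw (by rw [hw0, dotProduct_zero])
  have hdual : dotProductBilin F F ℓ ∘ₗ g.mulVecLin = dotProductBilin F F ℓ ↔ ℓ ᵥ* g = ℓ := by
    simp only [LinearMap.ext_iff, ← dotProduct_eq_iff, LinearMap.comp_apply, mulVecLin_apply,
      dotProductBilin_apply_apply, dotProduct_mulVec]
  rw [← hdual]
  exact map_dual_mul_dual_smul_iff (ℓ := dotProductBilin F F ℓ) (g := g.mulVecLin) hw hgw

end Aut

theorem aut_E2_zero_general (F : Type*) [Field F] :
    Aut (!![1, 0, 0, 0; 1, 0, 0, 0] : Matrix (Fin 2) (Fin 4) F) =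
      {g | ∃ t : F, t ≠ 1 ∧ g = !![1, 0; t, 1 - t]} := by
  ext g
  have hw : ![1, 0] ⬝ᵥ ![1, 1] ≠ (0 : F) := by simp
  rw [E2_zero_eq_vecMulVec_tensorVec, mem_Aut_vecMulVec_tensorVec_iff hw,
    mulVec_one_one_and_vecMul_one_zero_iff, Set.mem_ofPred_eq, ← exists_and_left]
  refine exists_congr fun t => and_congr_left ?_
  rintro rfl
  rw [isUnit_iff_isUnit_det, det_fin_two_of, isUnit_iff_ne_zero]
  simp [sub_eq_zero, eq_comm (a := t)]

theorem aut_E2_zero (F : Type*) [Field F] [IsAlgClosed F] (hchar : ringChar F ≠ 2) :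
    Aut (!![1, 0, 0, 0; 1, 0, 0, 0] : Matrix (Fin 2) (Fin 4) F) =
      {g | ∃ t : F, t ≠ 1 ∧ g = !![1, 0; t, 1 - t]} :=
  aut_E2_zero_general F
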